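/- Let n be even, let A be a subgroup of (ℤ/nℤ)^× such that n/2 − a ∈ A for every a ∈ A (equivalently, A satisfies the orbit decomposition A = {jn/k+1 : j ∈ J₊} ∪ {jn/k−1 : j ∈ J₋} with k even and J₋ = k/2 − J₊ modulo k), let r ∈ ℤ/nℤ have odd integer representative, and let X = Ar. Then for every y ∈ ℤ/nℤ: if y is even then σ_X(y) is real, and if y is odd then σ_X(y) is purely imaginary (its real part is zero). -/

import Mathlib

open Complex

/-- `e(θ) = exp(2πiθ)`. -/
noncomputable def e2 (θ : ℝ) : ℂ := Complex.exp (2 * Real.pi * Complex.I * θ)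

/-- The cyclic supercharacter attached to a subset `X` of `ℤ/nℤ`:
`σ_X(y) = Σ_{x ∈ X} e(xy/n)`. -/
noncomputable def superchar (n : ℕ) (X : Set (ZMod n)) (y : ZMod n) : ℂ :=
  ∑ᶠ x ∈ X, e2 (((x.val * y.val : ℕ) : ℝ) / (n : ℝ))

/-- The orbit `Ar = {ar : a ∈ A}` of `r` under a unit subgroup `A`. -/
def unitOrbit (n : ℕ) (A : Subgroup (ZMod n)ˣ) (r : ZMod n) : Set (ZMod n) :=
  (fun a : (ZMod n)ˣ => (a : ZMod n) * r) '' (A : Set (ZMod n)ˣ)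

/-!
If `X` is symmetric under the reflection `x ↦ c - x`, reindexing along it gives
`∑ ψ x = ψ c * conj (∑ ψ x)` over `X`, for every character `ψ`. Take `c = n / 2` and
`ψ x = e(xy/n)`: then `ψ c = (-1) ^ y`, so the sum equals its conjugate for even `y` and minus its
conjugate for odd `y`. The orbit `Ar` inherits the symmetry of `A` because `(n / 2) * r = n / 2`
when `r` is odd.
-/

open scoped ComplexConjugate

section Reflection

variable {G : Type*} [AddCommGroup G] {X : Set G} {c : G}

lemma bijOn_const_sub (hX : ∀ x ∈ X, c - x ∈ X) : Set.BijOn (fun x ↦ c - x) X X :=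
  have hinv : Set.LeftInvOn (fun x ↦ c - x) (fun x ↦ c - x) X := fun x _ ↦ sub_sub_cancel c x
  Set.InvOn.bijOn ⟨hinv, hinv⟩ hX hX

lemma finsum_mem_addChar_eq_mul_conj [Finite G] (ψ : AddChar G ℂ) (hX : ∀ x ∈ X, c - x ∈ X) :
    ∑ᶠ x ∈ X, ψ x = ψ c * conj (∑ᶠ x ∈ X, ψ x) := by
  have apply_reflect (x : G) : ψ (c - x) = ψ c * conj (ψ x) := by
    rw [sub_eq_add_neg, AddChar.map_add_eq_mul, AddChar.map_neg_eq_conj]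
  calc ∑ᶠ x ∈ X, ψ x
      = ∑ᶠ x ∈ X, ψ (c - x) :=
        (finsum_mem_eq_of_bijOn _ (bijOn_const_sub hX) fun _ _ ↦ rfl).symm
    _ = ∑ᶠ x ∈ X, ψ c * conj (ψ x) := by simp only [apply_reflect]
    _ = ψ c * conj (∑ᶠ x ∈ X, ψ x) :=
        (((AddMonoidHom.mulLeft (ψ c)).comp (starRingEnd ℂ : ℂ →+ ℂ)).map_finsum_mem
          _ X.toFinite).symm

end Reflection

lemma e2_intCast_div (n : ℕ) [NeZero n] (k : ℤ) :
    e2 ((k : ℝ) / n) = ZMod.stdAddChar (k : ZMod n) := by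
  rw [ZMod.stdAddChar_coe, e2]
  push_cast
  rw [mul_div_assoc]

lemma superchar_eq_finsum_stdAddChar (n : ℕ) [NeZero n] (X : Set (ZMod n)) (y : ZMod n) :
    superchar n X y = ∑ᶠ x ∈ X, ZMod.stdAddChar (y * x) := by
  refine finsum_mem_congr rfl fun x _ ↦ ?_
  have h := e2_intCast_div n (x.val * y.val : ℕ)
  rw [Int.cast_natCast] at h
  rw [h, Int.cast_natCast, Nat.cast_mul, ZMod.natCast_zmod_val, ZMod.natCast_zmod_val, mul_comm]

lemma superchar_eq_stdAddChar_mul_conj {n : ℕ} [NeZero n] {X : Set (ZMod n)} {c : ZMod n}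
    (hX : ∀ x ∈ X, c - x ∈ X) (y : ZMod n) :
    superchar n X y = ZMod.stdAddChar (y * c) * conj (superchar n X y) := by
  rw [superchar_eq_finsum_stdAddChar]
  exact finsum_mem_addChar_eq_mul_conj (AddChar.mulShift ZMod.stdAddChar y) hX

section Half

variable {n : ℕ}

lemma two_mul_natCast_half (he : Even n) : (2 : ZMod n) * ((n / 2 : ℕ) : ZMod n) = 0 := by
  have h : ((2 * (n / 2) : ℕ) : ZMod n) = 0 := by
    rw [Nat.two_mul_div_two_of_even he, ZMod.natCast_self]
  exact_mod_cast h

variable [NeZero n]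

lemma mul_natCast_half_of_even_val (he : Even n) {y : ZMod n} (hy : Even y.val) :
    y * ((n / 2 : ℕ) : ZMod n) = 0 := by
  obtain ⟨k, hk⟩ := hy
  have hy' : y = 2 * k := by
    rw [← ZMod.natCast_zmod_val y, hk, Nat.cast_add, two_mul]
  rw [hy', mul_right_comm, two_mul_natCast_half he, zero_mul]

lemma mul_natCast_half_of_odd_val (he : Even n) {y : ZMod n} (hy : Odd y.val) :
    y * ((n / 2 : ℕ) : ZMod n) = ((n / 2 : ℕ) : ZMod n) := by
  obtain ⟨k, hk⟩ := hy
  have hy' : y = 2 * k + 1 := by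
    rw [← ZMod.natCast_zmod_val y, hk]
    push_cast
    rfl
  rw [hy', add_mul, mul_right_comm, two_mul_natCast_half he, zero_mul, zero_add, one_mul]

lemma stdAddChar_natCast_half (he : Even n) :
    ZMod.stdAddChar ((n / 2 : ℕ) : ZMod n) = (-1 : ℂ) := by
  have hn : (n : ℂ) ≠ 0 := NeZero.ne _
  have half_cast : ((n / 2 : ℕ) : ℂ) = n / 2 := Nat.cast_div_charZero he.two_dvd
  rw [← Int.cast_natCast, ZMod.stdAddChar_coe, ← Complex.exp_pi_mul_I, Int.cast_natCast, half_cast]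
  congr 1
  field_simp

lemma half_sub_mem_unitOrbit (he : Even n) {A : Subgroup (ZMod n)ˣ}
    (hA : ∀ a ∈ A, ∃ b ∈ A, (b : ZMod n) = ((n / 2 : ℕ) : ZMod n) - a)
    {r : ZMod n} (hr : Odd r.val) :
    ∀ x ∈ unitOrbit n A r, ((n / 2 : ℕ) : ZMod n) - x ∈ unitOrbit n A r := by
  rintro _ ⟨a, ha, rfl⟩
  obtain ⟨b, hb, hba⟩ := hA a ha
  refine ⟨b, hb, ?_⟩
  simp only [hba]
  rw [sub_mul, mul_comm _ r, mul_natCast_half_of_odd_val he hr]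

theorem stmt11_general (he : Even n) {X : Set (ZMod n)}
    (hX : ∀ x ∈ X, ((n / 2 : ℕ) : ZMod n) - x ∈ X) (y : ZMod n) :
    (Even y.val → ∃ t : ℝ, superchar n X y = (t : ℂ))
    ∧ (Odd y.val → (superchar n X y).re = 0) := by
  have reflection := superchar_eq_stdAddChar_mul_conj hX y
  constructor
  · intro hy
    rw [mul_natCast_half_of_even_val he hy, AddChar.map_zero_eq_one, one_mul] at reflection
    exact Complex.conj_eq_iff_real.mp reflection.symm
  · intro hy
    rw [mul_natCast_half_of_odd_val he hy, stdAddChar_natCast_half he, neg_one_mul] at reflection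
    have re_eq_neg := congrArg Complex.re reflection
    rw [Complex.neg_re, Complex.conj_re] at re_eq_neg
    exact self_eq_neg.mp re_eq_neg

end Half

theorem stmt11 (n : ℕ) (hn : 0 < n) (he : Even n)
    (A : Subgroup (ZMod n)ˣ)
    (hA : ∀ a : (ZMod n)ˣ, a ∈ A → ∃ b : (ZMod n)ˣ, b ∈ A ∧
      (b : ZMod n) = ((n / 2 : ℕ) : ZMod n) - (a : ZMod n))
    (r : ZMod n) (hr : Odd r.val) (y : ZMod n) :
    (Even y.val → ∃ t : ℝ, superchar n (unitOrbit n A r) y = (t : ℂ))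
    ∧ (Odd y.val → (superchar n (unitOrbit n A r) y).re = 0) := by
  have : NeZero n := ⟨hn.ne'⟩
  exact stmt11_general he (half_sub_mem_unitOrbit he hA hr) y
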